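/- If R is a tournament with inv(R) = 3 admitting pairwise disjoint sets A, B, C ⊆ V(R) such that A∪B, A∪C, B∪C form a decycling family of R, then for L = C⃗₃ (the directed 3-cycle) we have inv(L → R) = 3 < inv(L) + inv(R) = 4. In particular, there is an explicit 9-vertex tournament R for which inv(R) = inv(C⃗₃ → R) = 3, disproving the dijoin conjecture. -/

import Mathlib

/-- Inverting a set `X` in a digraph `D`: edges with both endpoints in `X`
are reversed, all other edges are unchanged. -/
def Invert {V : Type*} (D : V → V → Prop) (X : Set V) : V → V → Prop :=
  fun u v => (u ∈ X ∧ v ∈ X ∧ D v u) ∨ (¬(u ∈ X ∧ v ∈ X) ∧ D u v)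

/-- A digraph is acyclic if it has no directed cycle. -/
def IsAcyclic {V : Type*} (D : V → V → Prop) : Prop :=
  ∀ x : V, ¬ Relation.TransGen D x x

/-- A loopless digraph without digons (an oriented graph). -/
def IsOriented {V : Type*} (D : V → V → Prop) : Prop :=
  ∀ u v, D u v → ¬ D v u

/-- A tournament: an oriented graph with exactly one edge between any two
distinct vertices. -/
def IsTournament {V : Type*} (D : V → V → Prop) : Prop :=
  (∀ u v, D u v → ¬ D v u) ∧ ∀ u v, u ≠ v → D u v ∨ D v u

/-- The inversion number of a digraph: the minimum length of a decycling
family, i.e. a sequence of sets whose successive inversion makes `D` acyclic. -/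
noncomputable def invNum {V : Type*} (D : V → V → Prop) : ℕ :=
  sInf {k | ∃ Xs : List (Set V), Xs.length = k ∧ IsAcyclic (Xs.foldl Invert D)}

/-- The dijoin `L → R`: disjoint copies of `L` and `R` with all edges oriented
from `L` towards `R`. -/
def Dijoin {α β : Type*} (L : α → α → Prop) (R : β → β → Prop) :
    α ⊕ β → α ⊕ β → Prop
  | Sum.inl u, Sum.inl v => L u v
  | Sum.inr u, Sum.inr v => R u v
  | Sum.inl _, Sum.inr _ => True
  | Sum.inr _, Sum.inl _ => False

/-- The directed 3-cycle. -/
def C3 : Fin 3 → Fin 3 → Prop := fun u v => v = u + 1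

theorem acyc_of_hom {α β : Type*} {D : α → α → Prop} {E : β → β → Prop} (f : α → β)
    (h : ∀ u v, D u v → E (f u) (f v)) (hE : IsAcyclic E) : IsAcyclic D :=
  fun x hx => hE (f x) (Relation.TransGen.lift f h x x hx)

theorem acyc_lt {α : Type*} {D : α → α → Prop} (f : α → ℕ)
    (h : ∀ u v, D u v → f u < f v) : IsAcyclic D := by
  refine acyc_of_hom (E := fun a b : ℕ => a < b) f h ?_
  intro x hx
  rw [Relation.transGen_eq_self] at hx
  exact lt_irrefl _ hx

theorem dijoin_acyc {α β : Type*} {L : α → α → Prop} {R : β → β → Prop}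
    (hL : IsAcyclic L) (hR : IsAcyclic R) : IsAcyclic (Dijoin L R) := by
  have key : ∀ x y, Relation.TransGen (Dijoin L R) x y →
      Dijoin (Relation.TransGen L) (Relation.TransGen R) x y := by
    intro x y h
    induction h with
    | single h =>
      rename_i b
      rcases x with x | x <;> rcases b with b | b <;> simp only [Dijoin] at h ⊢
      · exact .single h
      · exact .single h
    | @tail b c _ h ih =>
      rcases x with x | x <;> rcases b with b | b <;> rcases c with c | c <;>
        simp only [Dijoin] at h ih ⊢
      · exact ih.tail h
      · exact ih.tail h
  rintro (x | x) hx
  · exact hL x (key _ _ hx)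
  · exact hR x (key _ _ hx)

theorem foldl_restrict {α β : Type*} (f : α → β) (Xs : List (Set β)) :
    ∀ (D : α → α → Prop) (E : β → β → Prop), (∀ u v, D u v ↔ E (f u) (f v)) →
    ∀ u v, (Xs.map (fun X => f ⁻¹' X)).foldl Invert D u v ↔ Xs.foldl Invert E (f u) (f v) := by
  induction Xs with
  | nil => intro D E h; simpa using h
  | cons X Xs ih =>
    intro D E h
    simp only [List.map_cons, List.foldl_cons]
    apply ih
    intro u v
    simp only [Invert, Set.mem_preimage, h]

theorem invNum_le {V : Type*} (D : V → V → Prop) (Xs : List (Set V))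
    (h : IsAcyclic (Xs.foldl Invert D)) : invNum D ≤ Xs.length :=
  Nat.sInf_le ⟨Xs, rfl, h⟩

theorem le_invNum {V : Type*} (D : V → V → Prop) (n : ℕ) (Ys : List (Set V))
    (hY : IsAcyclic (Ys.foldl Invert D))
    (h : ∀ Xs : List (Set V), IsAcyclic (Xs.foldl Invert D) → n ≤ Xs.length) : n ≤ invNum D := by
  apply le_csInf
  · exact ⟨_, Ys, rfl, hY⟩
  · rintro k ⟨Xs, rfl, hX⟩
    exact h Xs hX

theorem c3_acyc : IsAcyclic (Invert C3 {0, 1}) := by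
  refine acyc_lt (fun i => if i = 1 then 0 else if i = 2 then 1 else 2) ?_
  intro u v
  simp only [Invert, C3, Set.mem_insert_iff, Set.mem_singleton_iff]
  revert u v
  decide

theorem c3_inv : invNum C3 = 1 := by
  apply le_antisymm
  · exact invNum_le C3 [{0, 1}] c3_acyc
  · apply le_invNum C3 1 [{0, 1}] c3_acyc
    rintro (_ | ⟨X, Xs⟩) h
    · exact absurd (((Relation.TransGen.single (show C3 0 1 by simp [C3])).tail
        (show C3 1 2 by simp [C3])).tail (show C3 2 0 by simp [C3])) (h 0)
    · simp

/-- Extending a set by the vertices 0, 1 of the cycle. -/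
def extSet {β : Type*} (X : Set β) : Set (Fin 3 ⊕ β) :=
  {z | Sum.elim (fun i => i = 0 ∨ i = 1) (fun b => b ∈ X) z}

theorem part1 (β : Type) (R : β → β → Prop) (h3 : invNum R = 3) (A B C : Set β)
    (hAB : Disjoint A B) (hAC : Disjoint A C) (hBC : Disjoint B C)
    (hac : IsAcyclic ([A ∪ B, A ∪ C, B ∪ C].foldl Invert R)) :
    invNum (Dijoin C3 R) = 3 := by
  have hfold : IsAcyclic ([extSet (A ∪ B), extSet (A ∪ C), extSet (B ∪ C)].foldl Invert
      (Dijoin C3 R)) := by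
    refine acyc_of_hom id ?_ (dijoin_acyc c3_acyc hac)
    have e1 : ∀ b, b ∈ A → b ∉ B := fun b h h' => Set.disjoint_left.1 hAB h h'
    have e2 : ∀ b, b ∈ A → b ∉ C := fun b h h' => Set.disjoint_left.1 hAC h h'
    have e3 : ∀ b, b ∈ B → b ∉ C := fun b h h' => Set.disjoint_left.1 hBC h h'
    rintro (u | u) (v | v)
    · simp only [List.foldl, Invert, extSet, Dijoin, Set.mem_ofPred_eq, Sum.elim_inl, id,
        Set.mem_insert_iff, Set.mem_singleton_iff]
      by_cases h1 : u = 0 ∨ u = 1 <;> by_cases h2 : v = 0 ∨ v = 1 <;> simp [h1, h2]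
    · simp [Dijoin]
    · have := e1 u
      have := e2 u
      have := e3 u
      simp only [List.foldl, Invert, extSet, Dijoin, Set.mem_ofPred_eq, Sum.elim_inl,
        Sum.elim_inr, id, Set.mem_union]
      by_cases h1 : v = 0 ∨ v = 1 <;> by_cases hA : u ∈ A <;> by_cases hB : u ∈ B <;>
        by_cases hC : u ∈ C <;> simp_all
    · simp only [List.foldl, Invert, extSet, Dijoin, Set.mem_ofPred_eq, Sum.elim_inr, id]
      exact fun h => h
  apply le_antisymm
  · exact invNum_le _ _ hfold
  · apply le_invNum _ 3 _ hfold
    intro Xs hX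
    have := invNum_le R (Xs.map (fun X => Sum.inr ⁻¹' X)) (acyc_of_hom Sum.inr
      (fun u v h => (foldl_restrict Sum.inr Xs R (Dijoin C3 R)
        (fun u v => by simp [Dijoin]) u v).1 h) hX)
    rw [h3] at this
    simpa using this

/-- The explicit tournament. -/
def rb (i j : ℕ) : Bool :=
  bif !(i % 3).beq 1 && !(j % 3).beq 1 && !(i / 3).beq (j / 3) then Nat.blt j i else Nat.blt i j

def eb (p q : Fin 9 × Bool × Bool) : Bool :=
  bif xor (p.2.1 && q.2.1) (p.2.2 && q.2.2) then rb q.1.val p.1.val else rb p.1.val q.1.val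

def badl : List (Fin 9 × Bool × Bool) → Bool
  | [] => false
  | p :: l => l.any fun q => eb p q && l.any fun r => eb q r && eb r p

def refute : ℕ → List (Fin 9 × Bool × Bool) → Bool
  | 0, l => badl l
  | n + 1, l => badl l ||
      (refute n ((Fin.ofNat 9 n, false, false) :: l) && refute n ((Fin.ofNat 9 n, false, true) :: l) &&
       refute n ((Fin.ofNat 9 n, true, false) :: l) && refute n ((Fin.ofNat 9 n, true, true) :: l))

theorem badl_spec (f : Fin 9 → Bool × Bool) (l : List (Fin 9 × Bool × Bool))
    (hl : ∀ p ∈ l, p = (p.1, f p.1)) (h : badl l = true) :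
    ∃ i j k, eb (i, f i) (j, f j) = true ∧ eb (j, f j) (k, f k) = true ∧
      eb (k, f k) (i, f i) = true := by
  cases l with
  | nil => simp [badl] at h
  | cons p l =>
    simp only [badl, List.any_eq_true, Bool.and_eq_true] at h
    obtain ⟨q, hq, h1, r, hr, h2, h3⟩ := h
    refine ⟨p.1, q.1, r.1, ?_⟩
    rw [← hl p (by simp), ← hl q (by simp [hq]), ← hl r (by simp [hr])]
    exact ⟨h1, h2, h3⟩

theorem refute_spec (f : Fin 9 → Bool × Bool) (n : ℕ) : ∀ (l : List (Fin 9 × Bool × Bool))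
    (_ : ∀ p ∈ l, p = (p.1, f p.1)) (_ : refute n l = true),
    ∃ i j k, eb (i, f i) (j, f j) = true ∧ eb (j, f j) (k, f k) = true ∧
      eb (k, f k) (i, f i) = true := by
  induction n with
  | zero => intro l hl h; exact badl_spec f l hl h
  | succ n ih =>
    intro l hl h
    simp only [refute, Bool.or_eq_true, Bool.and_eq_true] at h
    rcases h with h | ⟨⟨⟨h1, h2⟩, h3⟩, h4⟩
    · exact badl_spec f l hl h
    · apply ih ((Fin.ofNat 9 n, f (Fin.ofNat 9 n)) :: l)
      · intro p hp
        rcases List.mem_cons.1 hp with rfl | hp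
        · rfl
        · exact hl p hp
      · rcases f (Fin.ofNat 9 n) with ⟨_ | _, _ | _⟩ <;> assumption

theorem refute_nine : refute 9 [] = true := by decide +kernel

/-- The explicit tournament, as a relation. -/
def R9 : Fin 9 → Fin 9 → Prop := fun i j => rb i.val j.val = true

theorem R9_tour : IsTournament R9 := by
  unfold IsTournament R9
  constructor <;> decide +kernel

theorem R9_two (X Y : Set (Fin 9)) : ¬ IsAcyclic ([X, Y].foldl Invert R9) := by
  classical
  intro h
  have key : ∀ i j, eb (i, decide (i ∈ X), decide (i ∈ Y)) (j, decide (j ∈ X), decide (j ∈ Y)) = true →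
      [X, Y].foldl Invert R9 i j := by
    intro i j
    simp only [List.foldl, Invert, eb, R9]
    by_cases h1 : i ∈ X <;> by_cases h2 : i ∈ Y <;> by_cases h3 : j ∈ X <;>
      by_cases h4 : j ∈ Y <;> simp [h1, h2, h3, h4]
  obtain ⟨i, j, k, h1, h2, h3⟩ := refute_spec (fun i => (decide (i ∈ X), decide (i ∈ Y))) 9 []
    (by simp) refute_nine
  exact h i (((Relation.TransGen.single (key _ _ h1)).tail (key _ _ h2)).tail (key _ _ h3))

theorem invert_empty {V : Type*} (D : V → V → Prop) : Invert D ∅ = D := by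
  funext u v
  simp [Invert]

def cls (c : ℕ) : Set (Fin 9) := {i | i.val % 3 ≠ 1 ∧ i.val / 3 = c}

set_option synthInstance.maxHeartbeats 400000 in
set_option synthInstance.maxSize 10000 in
theorem R9_acyc : IsAcyclic ([cls 0 ∪ cls 1, cls 0 ∪ cls 2, cls 1 ∪ cls 2].foldl Invert R9) := by
  refine acyc_lt (fun i => i.val) ?_
  intro u v
  simp only [List.foldl, Invert, cls, R9, Set.mem_union, Set.mem_ofPred_eq]
  revert u v
  decide +kernel

theorem cls_disj {c d : ℕ} (h : c ≠ d) : Disjoint (cls c) (cls d) :=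
  Set.disjoint_left.2 fun _ h1 h2 => h (h1.2.symm.trans h2.2)

theorem R9_inv : invNum R9 = 3 := by
  apply le_antisymm
  · exact invNum_le _ _ R9_acyc
  · apply le_invNum _ 3 _ R9_acyc
    intro Xs hX
    rcases Xs with _ | ⟨X, _ | ⟨Y, _ | ⟨Z, l⟩⟩⟩
    · exact absurd (by simpa [invert_empty] using hX) (R9_two ∅ ∅)
    · exact absurd (by simpa [invert_empty] using hX) (R9_two X ∅)
    · exact absurd hX (R9_two X Y)
    · simp

/-- If `R` is a tournament with `inv(R) = 3` admitting pairwise disjoint sets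
`A, B, C` such that `A∪B, A∪C, B∪C` is a decycling family, then
`inv(C⃗₃ → R) = 3 < inv(C⃗₃) + inv(R) = 4`; and such an `R` exists on 9
vertices, disproving the dijoin conjecture. -/
theorem dijoin_conjecture_counterexample :
    (∀ (β : Type) [Fintype β] (R : β → β → Prop),
      IsTournament R → invNum R = 3 →
      ∀ A B C : Set β, Disjoint A B → Disjoint A C → Disjoint B C →
        IsAcyclic ([A ∪ B, A ∪ C, B ∪ C].foldl Invert R) →
        invNum (Dijoin C3 R) = 3 ∧ invNum C3 + invNum R = 4) ∧
    (∃ R : Fin 9 → Fin 9 → Prop, IsTournament R ∧ invNum R = 3 ∧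
      invNum (Dijoin C3 R) = 3) := by
  refine ⟨?_, R9, R9_tour, R9_inv, ?_⟩
  · intro β _ R _ h3 A B C hAB hAC hBC hac
    exact ⟨part1 β R h3 A B C hAB hAC hBC hac, by rw [c3_inv, h3]⟩
  · exact part1 _ R9 R9_inv _ _ _ (cls_disj (by decide)) (cls_disj (by decide))
      (cls_disj (by decide)) R9_acyc
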